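/- arXiv:1804.07416 — 2 statements merged into one kernel-verified Lean document; each statement's English description precedes it below -/
import Mathlib

section
/- For jointly standard normal variables (W_i, W_j) with correlation ρ ∈ (−1,1), the covariance of the indicators 1_{|W_i| ≤ t} and 1_{|W_j| ≤ t} equals Σ_{k≥1} (ρ^k/k!)·[H_{k−1}(t)φ(t) − H_{k−1}(−t)φ(−t)]², where H_k are the Hermite polynomials and φ the standard normal density. -/
open MeasureTheory ProbabilityTheory Filter

/-- The standard normal density. -/
noncomputable def stdGaussianPDF (x : ℝ) : ℝ :=
  (Real.sqrt (2 * Real.pi))⁻¹ * Real.exp (-x ^ 2 / 2)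

/-- The `k`-th probabilists' Hermite polynomial evaluated at `x`. -/
noncomputable def Hermite (k : ℕ) (x : ℝ) : ℝ := Polynomial.aeval x (Polynomial.hermite k)

/-- The bivariate standard normal density with correlation `ρ`. -/
noncomputable def bvnPDF (ρ x y : ℝ) : ℝ :=
  (2 * Real.pi * Real.sqrt (1 - ρ ^ 2))⁻¹ *
    Real.exp (-(x ^ 2 + y ^ 2 - 2 * ρ * x * y) / (2 * (1 - ρ ^ 2)))

/-!
Fourier inversion turns `H_k φ` into the integral of `(-iu)^k e^{ixu}` against the standard Gaussian
measure, up to the factor `(√(2π))⁻¹`. Likewise `f_ρ(x, y)` is `(2π)⁻¹` times the double Gaussian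
integral of `e^{-ρuv} e^{ixu} e^{iyv}`, and expanding `e^{-ρuv}` gives Mehler's series. Since
`|ρ| < 1`, the function `e^{|ρ||u||v|}` is integrable against the product Gaussian measure; this
dominates the expansion and bounds the series uniformly in `x` and `y`. It may therefore be
integrated term by term over a rectangle, where `(H_{k-1} φ)' = -H_k φ` evaluates each factor; the
term `k = 0` is the product of the marginals.
-/

theorem hasSum_integral_prod_exp_mul {𝕜 α β : Type*} [RCLike 𝕜] {mα : MeasurableSpace α}
    {mβ : MeasurableSpace β} {μ : Measure α} {ν : Measure β} [SFinite μ] [SFinite ν]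
    {X f : α → 𝕜} {Y g : β → 𝕜} (hX : Measurable X) (hf : Measurable f) (hY : Measurable Y)
    (hg : Measurable g)
    (hint : Integrable (fun p : α × β =>
      Real.exp (‖X p.1‖ * ‖Y p.2‖) * (‖f p.1‖ * ‖g p.2‖)) (μ.prod ν)) :
    HasSum (fun k : ℕ => (k.factorial : 𝕜)⁻¹
        * ((∫ u, X u ^ k * f u ∂μ) * ∫ v, Y v ^ k * g v ∂ν))
      (∫ p : α × β, NormedSpace.exp (X p.1 * Y p.2) * (f p.1 * g p.2) ∂μ.prod ν) := by
  have hbound (p : α × β) : HasSum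
      (fun k : ℕ => (‖X p.1‖ * ‖Y p.2‖) ^ k / k.factorial * (‖f p.1‖ * ‖g p.2‖))
      (Real.exp (‖X p.1‖ * ‖Y p.2‖) * (‖f p.1‖ * ‖g p.2‖)) := by
    rw [Real.exp_eq_exp_ℝ]
    exact (NormedSpace.expSeries_div_hasSum_exp (‖X p.1‖ * ‖Y p.2‖)).mul_right _
  have hlim (p : α × β) : HasSum
      (fun k : ℕ => (X p.1 * Y p.2) ^ k / (k.factorial : 𝕜) * (f p.1 * g p.2))
      (NormedSpace.exp (X p.1 * Y p.2) * (f p.1 * g p.2)) :=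
    (NormedSpace.expSeries_div_hasSum_exp (X p.1 * Y p.2)).mul_right _
  have hmeas (k : ℕ) : AEStronglyMeasurable (fun p : α × β =>
      (X p.1 * Y p.2) ^ k / (k.factorial : 𝕜) * (f p.1 * g p.2)) (μ.prod ν) :=
    (((((hX.comp measurable_fst).mul (hY.comp measurable_snd)).pow_const k).div_const _).mul
      ((hf.comp measurable_fst).mul (hg.comp measurable_snd))).aestronglyMeasurable
  have hdom (k : ℕ) (p : α × β) : ‖(X p.1 * Y p.2) ^ k / (k.factorial : 𝕜) * (f p.1 * g p.2)‖
      ≤ (‖X p.1‖ * ‖Y p.2‖) ^ k / k.factorial * (‖f p.1‖ * ‖g p.2‖) := by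
    simp only [norm_mul, norm_div, norm_pow, RCLike.norm_natCast, le_refl]
  have hsum := hasSum_integral_of_dominated_convergence _ hmeas
    (fun k => ae_of_all _ (hdom k)) (ae_of_all _ fun p => (hbound p).summable)
    (by simpa only [(hbound _).tsum_eq] using hint) (ae_of_all _ hlim)
  refine hsum.congr_fun fun k => ?_
  rw [← integral_prod_mul, ← integral_const_mul]
  congr with p
  ring

theorem iteratedDeriv_ofReal_comp {f : ℝ → ℝ} {n : ℕ} {x : ℝ} (hf : ContDiffAt ℝ n f x) :
    iteratedDeriv n (fun x => (f x : ℂ)) x = iteratedDeriv n f x := by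
  have h := Complex.ofRealCLM.iteratedFDeriv_comp_left hf le_rfl
  simp only [iteratedDeriv_eq_iteratedFDeriv]
  exact DFunLike.congr_fun h fun _ => 1

theorem gaussianPDFReal_zero_one : gaussianPDFReal 0 1 = stdGaussianPDF := by
  ext x
  simp [gaussianPDFReal_def, stdGaussianPDF]

theorem contDiff_stdGaussianPDF {n : WithTop ℕ∞} : ContDiff ℝ n stdGaussianPDF := by
  unfold stdGaussianPDF
  fun_prop

theorem continuous_hermite_mul_stdGaussianPDF (n : ℕ) :
    Continuous fun x => Hermite n x * stdGaussianPDF x :=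
  (Polynomial.hermite n).continuous_aeval.mul (contDiff_stdGaussianPDF (n := 0)).continuous

theorem iteratedDeriv_stdGaussianPDF (n : ℕ) (x : ℝ) :
    iteratedDeriv n stdGaussianPDF x = (-1) ^ n * (Hermite n x * stdGaussianPDF x) := by
  have h := Polynomial.deriv_gaussian_eq_hermite_mul_gaussian n x
  rw [← iteratedDeriv_eq_iterate] at h
  unfold stdGaussianPDF
  rw [iteratedDeriv_const_mul_field]
  simp only [neg_div, h, Hermite]
  ring

theorem hasDerivAt_hermite_mul_stdGaussianPDF (n : ℕ) (x : ℝ) :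
    HasDerivAt (fun x => Hermite n x * stdGaussianPDF x)
      (-(Hermite (n + 1) x * stdGaussianPDF x)) x := by
  have heq (k : ℕ) (z : ℝ) :
      Hermite k z * stdGaussianPDF z = (-1) ^ k * iteratedDeriv k stdGaussianPDF z := by
    rw [iteratedDeriv_stdGaussianPDF, ← mul_assoc, ← mul_pow]
    simp
  have hd := (contDiff_stdGaussianPDF.differentiable_iteratedDeriv n
    (WithTop.coe_lt_top (n : ℕ∞)) x).hasDerivAt
  simp only [heq, iteratedDeriv_succ]
  exact (hd.const_mul _).congr_deriv (by ring)

theorem charFun_gaussianReal_zero_one (x : ℝ) :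
    charFun (gaussianReal 0 1) x = (Real.sqrt (2 * Real.pi) * stdGaussianPDF x : ℝ) := by
  have : Real.sqrt (2 * Real.pi) ≠ 0 := by positivity
  rw [charFun_gaussianReal, stdGaussianPDF, mul_inv_cancel_left₀ this]
  simp [neg_div]

theorem hermite_mul_stdGaussianPDF_eq_integral (k : ℕ) (x : ℝ) :
    ((Hermite k x * stdGaussianPDF x : ℝ) : ℂ) = (Real.sqrt (2 * Real.pi) : ℂ)⁻¹
      * ∫ u : ℝ, (-(u * Complex.I)) ^ k * Complex.exp (x * u * Complex.I) ∂gaussianReal 0 1 := by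
  have hchar : charFun (gaussianReal 0 1)
      = fun x => ((Real.sqrt (2 * Real.pi) * stdGaussianPDF x : ℝ) : ℂ) :=
    funext charFun_gaussianReal_zero_one
  have hsqrt : (Real.sqrt (2 * Real.pi) : ℂ) ≠ 0 := by
    exact_mod_cast (show Real.sqrt (2 * Real.pi) ≠ 0 by positivity)
  have hderiv := iteratedDeriv_charFun (t := x) (memLp_id_gaussianReal (μ := 0) (v := 1) k)
  rw [hchar, iteratedDeriv_ofReal_comp (contDiff_const.mul contDiff_stdGaussianPDF).contDiffAt,
    iteratedDeriv_const_mul_field, iteratedDeriv_stdGaussianPDF] at hderiv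
  have hscale : ∫ u : ℝ, (-(u * Complex.I)) ^ k * Complex.exp (x * u * Complex.I) ∂gaussianReal 0 1
      = (-1) ^ k * (Complex.I ^ k
        * ∫ u : ℝ, u ^ k * Complex.exp (x * u * Complex.I) ∂gaussianReal 0 1) := by
    rw [← mul_assoc, ← mul_pow, ← integral_const_mul]
    congr with u
    rw [← mul_assoc, ← mul_pow]
    ring_nf
  have hsign : (-1 : ℂ) ^ k * (-1) ^ k = 1 := by rw [← mul_pow]; simp
  rw [hscale, ← hderiv, eq_inv_mul_iff_mul_eq₀ hsqrt]
  push_cast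
  linear_combination -(Real.sqrt (2 * Real.pi) * (Hermite k x * stdGaussianPDF x) : ℂ) * hsign

theorem integral_cexp_quadratic_gaussianReal {a : ℝ} (ha : a < 1) (c d : ℂ) :
    ∫ u : ℝ, Complex.exp (a / 2 * u ^ 2 + c * u + d) ∂gaussianReal 0 1
      = (Real.sqrt (1 - a) : ℂ)⁻¹ * Complex.exp (d + c ^ 2 / (2 * (1 - a))) := by
  have hb : (((a - 1) / 2 : ℝ) : ℂ).re < 0 := by
    rw [Complex.ofReal_re]
    linarith
  have hac : (1 - a : ℂ) ≠ 0 := by exact_mod_cast (sub_pos.mpr ha).ne'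
  have hdensity (u : ℝ) : stdGaussianPDF u • Complex.exp (a / 2 * u ^ 2 + c * u + d)
      = (Real.sqrt (2 * Real.pi) : ℂ)⁻¹
        * Complex.exp (((a - 1) / 2 : ℝ) * u ^ 2 + c * u + d) := by
    rw [stdGaussianPDF, Complex.real_smul, Complex.ofReal_mul, Complex.ofReal_exp, mul_assoc,
      ← Complex.exp_add, Complex.ofReal_inv]
    congr 2
    push_cast
    ring
  have hsqrt : ((Real.pi : ℂ) / -((a - 1) / 2 : ℝ)) ^ (1 / 2 : ℂ)
      = Real.sqrt (2 * Real.pi) * (Real.sqrt (1 - a) : ℂ)⁻¹ := by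
    have : Real.pi / -((a - 1) / 2) = 2 * Real.pi / (1 - a) := by
      rw [← neg_div, neg_sub]
      field
    rw [← Complex.ofReal_neg, ← Complex.ofReal_div, this, ← Complex.ofReal_inv,
      ← Complex.ofReal_mul, ← div_eq_mul_inv, ← Real.sqrt_div (by positivity), Real.sqrt_eq_rpow,
      Complex.ofReal_cpow (div_nonneg (by positivity) (by linarith))]
    norm_num
  rw [integral_gaussianReal_eq_integral_smul one_ne_zero, gaussianPDFReal_zero_one]
  simp only [hdensity]
  rw [integral_const_mul, integral_cexp_quadratic hb, hsqrt, mul_assoc, inv_mul_cancel_left₀]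
  · congr 2
    push_cast
    rw [← neg_sub (1 : ℂ) a]
    field
  · exact_mod_cast (show Real.sqrt (2 * Real.pi) ≠ 0 by positivity)

theorem integrable_exp_mul_sq_gaussianReal {a : ℝ} (ha : a < 1) :
    Integrable (fun u => Real.exp (a / 2 * u ^ 2)) (gaussianReal 0 1) := by
  rw [gaussianReal_of_var_ne_zero _ one_ne_zero,
    integrable_withDensity_iff (by fun_prop) (ae_of_all _ fun _ => gaussianPDF_lt_top)]
  simp only [toReal_gaussianPDF, gaussianPDFReal_zero_one]
  refine ((integrable_exp_neg_mul_sq (b := (1 - a) / 2) (by linarith)).const_mul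
    (Real.sqrt (2 * Real.pi))⁻¹).congr (ae_of_all _ fun u => ?_)
  simp only [stdGaussianPDF]
  rw [mul_left_comm, ← Real.exp_add]
  congr 2
  ring

theorem integrable_exp_mul_abs_mul_abs_gaussianReal_prod {r : ℝ} (hr₀ : 0 ≤ r) (hr : r < 1) :
    Integrable (fun p : ℝ × ℝ => Real.exp (r * |p.1| * |p.2|))
      ((gaussianReal 0 1).prod (gaussianReal 0 1)) := by
  have hint := integrable_exp_mul_sq_gaussianReal hr
  refine (hint.mul_prod hint).mono' (by fun_prop) (ae_of_all _ fun p => ?_)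
  rw [Real.norm_eq_abs, Real.abs_exp, ← Real.exp_add, Real.exp_le_exp]
  have := two_mul_le_add_sq |p.1| |p.2|
  rw [sq_abs, sq_abs] at this
  nlinarith

theorem summable_integral_abs_pow_sq_gaussianReal {ρ : ℝ} (hρ : |ρ| < 1) :
    Summable fun k : ℕ =>
      |ρ| ^ k / k.factorial * (∫ u, |u| ^ k ∂gaussianReal 0 1) ^ 2 := by
  have h := hasSum_integral_prod_exp_mul (μ := gaussianReal 0 1) (ν := gaussianReal 0 1)
    (X := fun u => |ρ| * |u|) (f := 1) (Y := fun v => |v|) (g := 1) (by fun_prop) (by fun_prop)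
    (by fun_prop) (by fun_prop)
    (by simpa using integrable_exp_mul_abs_mul_abs_gaussianReal_prod (abs_nonneg ρ) hρ)
  refine h.summable.congr fun k => ?_
  simp only [mul_pow, Pi.one_apply, mul_one, integral_const_mul]
  ring

theorem abs_hermite_mul_stdGaussianPDF_le (k : ℕ) (x : ℝ) :
    |Hermite k x * stdGaussianPDF x|
      ≤ (Real.sqrt (2 * Real.pi))⁻¹ * ∫ u, |u| ^ k ∂gaussianReal 0 1 := by
  have hnorm (u : ℝ) :
      ‖(-(u * Complex.I)) ^ k * Complex.exp (x * u * Complex.I)‖ = |u| ^ k := by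
    rw [norm_mul, ← Complex.ofReal_mul, Complex.norm_exp_ofReal_mul_I]
    simp
  rw [← Real.norm_eq_abs, ← Complex.norm_real, hermite_mul_stdGaussianPDF_eq_integral, norm_mul,
    norm_inv, Complex.norm_real, Real.norm_of_nonneg (Real.sqrt_nonneg _)]
  gcongr
  simpa only [hnorm] using norm_integral_le_integral_norm
    (μ := gaussianReal 0 1) fun u : ℝ => (-(u * Complex.I)) ^ k * Complex.exp (x * u * Complex.I)

theorem integral_cexp_mul_cexp_mul_I_gaussianReal (x : ℝ) (w : ℂ) :
    ∫ v : ℝ, Complex.exp (w * v) * Complex.exp (x * v * Complex.I) ∂gaussianReal 0 1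
      = Complex.exp ((w + x * Complex.I) ^ 2 / 2) := by
  have h := integral_cexp_quadratic_gaussianReal zero_lt_one (w + x * Complex.I) 0
  simp only [Complex.ofReal_zero, zero_div, zero_mul, zero_add, add_zero, sub_zero, Real.sqrt_one,
    Complex.ofReal_one, inv_one, one_mul, mul_one] at h
  rw [← h]
  congr with v
  rw [← Complex.exp_add]
  ring_nf

theorem bvnPDF_eq_integral {ρ : ℝ} (hρ : |ρ| < 1) (x y : ℝ) :
    (bvnPDF ρ x y : ℂ) = (2 * Real.pi : ℂ)⁻¹ * ∫ p : ℝ × ℝ,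
      Complex.exp (-(ρ * p.1 * p.2)) * (Complex.exp (x * p.1 * Complex.I)
        * Complex.exp (y * p.2 * Complex.I)) ∂(gaussianReal 0 1).prod (gaussianReal 0 1) := by
  have hint : Integrable (fun p : ℝ × ℝ => Complex.exp (-(ρ * p.1 * p.2))
      * (Complex.exp (x * p.1 * Complex.I) * Complex.exp (y * p.2 * Complex.I)))
      ((gaussianReal 0 1).prod (gaussianReal 0 1)) := by
    refine (integrable_exp_mul_abs_mul_abs_gaussianReal_prod (abs_nonneg ρ) hρ).mono'
      (by fun_prop) (ae_of_all _ fun p => ?_)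
    simp only [norm_mul, ← Complex.ofReal_mul, Complex.norm_exp_ofReal_mul_I, mul_one,
      ← Complex.ofReal_neg, Complex.norm_exp_ofReal, Real.exp_le_exp, ← abs_mul]
    exact neg_le_abs _
  have hρsq : ρ ^ 2 < 1 := (sq_lt_one_iff_abs_lt_one ρ).mpr hρ
  have hne : (1 - ρ ^ 2 : ℂ) ≠ 0 := by exact_mod_cast (sub_pos.mpr hρsq).ne'
  have hinner (u : ℝ) : ∫ v : ℝ, Complex.exp (-(ρ * u * v)) * (Complex.exp (x * u * Complex.I)
        * Complex.exp (y * v * Complex.I)) ∂gaussianReal 0 1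
      = Complex.exp ((ρ ^ 2 : ℝ) / 2 * u ^ 2 + ((x - ρ * y) * Complex.I) * u + -y ^ 2 / 2) := by
    simp only [mul_left_comm _ (Complex.exp (x * u * Complex.I)), ← neg_mul (ρ * u : ℂ)]
    rw [integral_const_mul, integral_cexp_mul_cexp_mul_I_gaussianReal, ← Complex.exp_add]
    congr 1
    push_cast
    linear_combination ((y : ℂ) ^ 2 / 2) * Complex.I_sq
  have hexp : -y ^ 2 / 2 + ((x - ρ * y) * Complex.I) ^ 2 / (2 * (1 - (ρ ^ 2 : ℝ)))
      = -(x ^ 2 + y ^ 2 - 2 * ρ * x * y) / (2 * (1 - ρ ^ 2) : ℂ) := by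
    rw [mul_pow, Complex.I_sq]
    push_cast
    field_simp
    ring
  rw [integral_prod _ hint]
  simp only [hinner]
  rw [integral_cexp_quadratic_gaussianReal hρsq, hexp, bvnPDF]
  push_cast
  rw [mul_inv, mul_assoc]

theorem hasSum_bvnPDF {ρ : ℝ} (hρ : |ρ| < 1) (x y : ℝ) :
    HasSum (fun k : ℕ => ρ ^ k / k.factorial
        * ((Hermite k x * stdGaussianPDF x) * (Hermite k y * stdGaussianPDF y)))
      (bvnPDF ρ x y) := by
  have h := hasSum_integral_prod_exp_mul (μ := gaussianReal 0 1) (ν := gaussianReal 0 1)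
    (X := fun u : ℝ => ρ * -(u * Complex.I)) (f := fun u : ℝ => Complex.exp (x * u * Complex.I))
    (Y := fun v : ℝ => -(v * Complex.I)) (g := fun v : ℝ => Complex.exp (y * v * Complex.I))
    (by fun_prop) (by fun_prop) (by fun_prop) (by fun_prop)
    (by simpa [← Complex.ofReal_mul, Complex.norm_exp_ofReal_mul_I] using
      integrable_exp_mul_abs_mul_abs_gaussianReal_prod (abs_nonneg ρ) hρ)
  have hmul (u v : ℝ) : (ρ * -(u * Complex.I)) * -(v * Complex.I) = -(ρ * u * v) := by
    linear_combination (ρ * u * v : ℂ) * Complex.I_sq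
  have hpi : (2 * Real.pi : ℂ)⁻¹ = (Real.sqrt (2 * Real.pi) : ℂ)⁻¹ ^ 2 := by
    rw [inv_pow, ← Complex.ofReal_pow, Real.sq_sqrt (by positivity)]
    push_cast
    rfl
  simp only [← Complex.exp_eq_exp_ℂ, hmul] at h
  rw [← Complex.hasSum_ofReal, bvnPDF_eq_integral hρ]
  refine (h.mul_left _).congr_fun fun k => ?_
  rw [Complex.ofReal_mul, Complex.ofReal_mul (Hermite k x * stdGaussianPDF x),
    hermite_mul_stdGaussianPDF_eq_integral, hermite_mul_stdGaussianPDF_eq_integral, hpi]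
  simp only [mul_pow (ρ : ℂ), mul_assoc ((ρ : ℂ) ^ k), integral_const_mul]
  push_cast
  ring

theorem hasSum_intervalIntegral_of_summable_bound {E : Type*} [NormedAddCommGroup E]
    [NormedSpace ℝ E] {f : ℕ → ℝ → E} {F : ℝ → E} {B : ℕ → ℝ}
    (hf : ∀ k, AEStronglyMeasurable (f k)) (hfB : ∀ k x, ‖f k x‖ ≤ B k) (hB : Summable B)
    (hF : ∀ x, HasSum (fun k => f k x) (F x)) (a b : ℝ) :
    HasSum (fun k => ∫ x in a..b, f k x) (∫ x in a..b, F x) :=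
  intervalIntegral.hasSum_integral_of_dominated_convergence (fun k _ => B k)
    (fun k => (hf k).restrict) (fun k => ae_of_all _ fun x _ => hfB k x)
    (ae_of_all _ fun _ _ => hB) intervalIntegrable_const (ae_of_all _ fun x _ => hF x)

theorem hasSum_intervalIntegral_intervalIntegral {𝕜 : Type*} [RCLike 𝕜] {f g : ℕ → ℝ → 𝕜}
    {w : ℕ → 𝕜} {B C : ℕ → ℝ} {F : ℝ → ℝ → 𝕜} (hf : ∀ k, AEStronglyMeasurable (f k))
    (hg : ∀ k, AEStronglyMeasurable (g k)) (hfB : ∀ k x, ‖f k x‖ ≤ B k)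
    (hgC : ∀ k y, ‖g k y‖ ≤ C k) (hsum : Summable fun k => ‖w k‖ * (B k * C k))
    (hF : ∀ x y, HasSum (fun k => w k * (f k x * g k y)) (F x y)) (a b c d : ℝ) :
    HasSum (fun k => w k * ((∫ x in a..b, f k x) * ∫ y in c..d, g k y))
      (∫ x in a..b, ∫ y in c..d, F x y) := by
  have hbound (k : ℕ) {s t : 𝕜} {K : ℝ} (hs : ‖s‖ ≤ B k) (ht : ‖t‖ ≤ K) :
      ‖w k * (s * t)‖ ≤ ‖w k‖ * (B k * K) := by
    rw [norm_mul, norm_mul]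
    have hB : 0 ≤ B k := (norm_nonneg s).trans hs
    gcongr
  have hinner (x : ℝ) :
      HasSum (fun k => w k * (f k x * ∫ y in c..d, g k y)) (∫ y in c..d, F x y) := by
    simp only [← intervalIntegral.integral_const_mul]
    exact hasSum_intervalIntegral_of_summable_bound
      (fun k => ((hg k).const_mul _).const_mul _) (fun k y => hbound k (hfB k x) (hgC k y))
      hsum (hF x) c d
  have hgint (k : ℕ) : ‖∫ y in c..d, g k y‖ ≤ C k * |d - c| :=
    intervalIntegral.norm_integral_le_of_norm_le_const (f := g k) fun y _ => hgC k y
  have houter := hasSum_intervalIntegral_of_summable_bound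
    (fun k => ((hf k).mul_const _).const_mul (w k)) (fun k x => hbound k (hfB k x) (hgint k))
    (by simpa only [mul_assoc] using hsum.mul_right |d - c|) hinner a b
  simpa only [intervalIntegral.integral_const_mul, intervalIntegral.integral_mul_const] using houter

theorem hasSum_integral_bvnPDF {ρ : ℝ} (hρ : |ρ| < 1) (a b c d : ℝ) :
    HasSum (fun k : ℕ => ρ ^ k / k.factorial
        * ((∫ x in a..b, Hermite k x * stdGaussianPDF x)
          * ∫ y in c..d, Hermite k y * stdGaussianPDF y))
      (∫ x in a..b, ∫ y in c..d, bvnPDF ρ x y) := by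
  have hmeas (k : ℕ) : AEStronglyMeasurable fun x => Hermite k x * stdGaussianPDF x :=
    (continuous_hermite_mul_stdGaussianPDF k).aestronglyMeasurable
  refine hasSum_intervalIntegral_intervalIntegral hmeas hmeas abs_hermite_mul_stdGaussianPDF_le
    abs_hermite_mul_stdGaussianPDF_le ?_ (hasSum_bvnPDF hρ) a b c d
  refine ((summable_integral_abs_pow_sq_gaussianReal hρ).mul_left
    ((Real.sqrt (2 * Real.pi))⁻¹ ^ 2)).congr fun k => ?_
  rw [norm_div, norm_pow, Real.norm_eq_abs, RCLike.norm_natCast]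
  ring

theorem integral_hermite_succ_mul_stdGaussianPDF (k : ℕ) (a b : ℝ) :
    ∫ x in a..b, Hermite (k + 1) x * stdGaussianPDF x
      = Hermite k a * stdGaussianPDF a - Hermite k b * stdGaussianPDF b := by
  have h := intervalIntegral.integral_eq_sub_of_hasDerivAt
    (fun x _ => hasDerivAt_hermite_mul_stdGaussianPDF k x)
    ((continuous_hermite_mul_stdGaussianPDF (k + 1)).neg.intervalIntegrable a b)
  rw [intervalIntegral.integral_neg] at h
  linarith

theorem stmt9_general {ρ : ℝ} (hρ : ρ ∈ Set.Ioo (-1 : ℝ) 1) (a b c d : ℝ) :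
    HasSum (fun k : ℕ => ρ ^ (k + 1) / (k + 1).factorial *
        ((Hermite k b * stdGaussianPDF b - Hermite k a * stdGaussianPDF a)
          * (Hermite k d * stdGaussianPDF d - Hermite k c * stdGaussianPDF c)))
      ((∫ x in a..b, ∫ y in c..d, bvnPDF ρ x y)
        - (∫ x in a..b, stdGaussianPDF x) * ∫ y in c..d, stdGaussianPDF y) := by
  have h := (hasSum_nat_add_iff' 1).mpr (hasSum_integral_bvnPDF (abs_lt.mpr hρ) a b c d)
  have hzero (x : ℝ) : Hermite 0 x * stdGaussianPDF x = stdGaussianPDF x := by simp [Hermite]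
  simp only [integral_hermite_succ_mul_stdGaussianPDF, Finset.sum_range_one, hzero, pow_zero,
    Nat.factorial_zero, Nat.cast_one, div_one, one_mul] at h
  exact h.congr_fun fun k => by ring

/-- Mehler-expansion formula for the covariance of the indicators
`1_{|W_i| ≤ t}` and `1_{|W_j| ≤ t}` for jointly standard normal `(W_i, W_j)`
with correlation `ρ`: the covariance is
`P(|W_i| ≤ t, |W_j| ≤ t) − P(|W| ≤ t)²`. -/
theorem stmt9 (ρ t : ℝ) (hρ : ρ ∈ Set.Ioo (-1 : ℝ) 1) (ht : 0 < t) :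
    (∫ x in Set.Icc (-t) t, ∫ y in Set.Icc (-t) t, bvnPDF ρ x y)
        - (∫ x in Set.Icc (-t) t, stdGaussianPDF x) ^ 2
      = ∑' k : ℕ, ρ ^ (k + 1) / (Nat.factorial (k + 1)) *
          (Hermite k t * stdGaussianPDF t - Hermite k (-t) * stdGaussianPDF (-t)) ^ 2 := by
  simpa only [← sq, intervalIntegral.integral_of_le (neg_le_self ht.le),
    ← integral_Icc_eq_integral_Ioc] using (stmt9_general hρ (-t) t (-t) t).tsum_eq.symm
end

section
/- For every k ≥ 1 and y ∈ ℝ, |e^{−y²/2} H_k(y)| ≤ C₀ √(k!) k^{−1/12} e^{−y²/4} for some absolute constant C₀ > 0. -/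
open MeasureTheory Filter

/-!
The Hermite function `ψ = H_k(y) e^{-y²/4}` solves Weber's equation `ψ'' + q ψ = 0` with
`q = (r⁶ - y²) / 4` and `r⁶ = 4 k + 2`. For a solution of `u'' + q u = 0` and any weight `f`,
`(f u'² - f' u u' + (f q + f'' / 2) u²)' = (2 f' q + f q' + f''' / 2) u²`.
The WKB weight `q ^ (-1/2)` cancels `2 f' q + f q'` but is singular at the turning point `y = r³`.
Shifting the potential by `r²`, its size at distance of order `1 / r` from the turning point, the
weight `f = (q + r²) ^ (-1/2)` makes `2 f' q + f q'` negative enough to absorb `f''' / 2`. The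
energy then decreases on all of `[0, r³]` while dominating `r u² / 16`. Beyond the turning point a
decaying solution has decreasing `u²`, so `r⁴ sup u²` is controlled by the data of `u` at `0`. For
`ψ` these are Hermite numbers: `H_k(0)² ≤ k! / √(k + 1)`.
-/

section WeightedEnergy

/-- The quadratic form `f v² - f' u v + (f q + f'' / 2) u²` attached to a solution `u`, with
derivative `v`, of `u'' + q u = 0`. The arguments `f₁`, `f₂` stand for the first two derivatives of
the weight `f`. -/
noncomputable def weightedEnergy (f f₁ f₂ q u v : ℝ → ℝ) (t : ℝ) : ℝ :=
  f t * v t ^ 2 - f₁ t * (u t * v t) + (f t * q t + f₂ t / 2) * u t ^ 2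

variable {f f₁ f₂ q u v : ℝ → ℝ} {t : ℝ}

lemma hasDerivAt_weightedEnergy {f₃ q₁ : ℝ}
    (hf : HasDerivAt f (f₁ t) t) (hf₁ : HasDerivAt f₁ (f₂ t) t) (hf₂ : HasDerivAt f₂ f₃ t)
    (hq : HasDerivAt q q₁ t) (hu : HasDerivAt u (v t) t) (hv : HasDerivAt v (-q t * u t) t) :
    HasDerivAt (weightedEnergy f f₁ f₂ q u v)
      ((2 * f₁ t * q t + f t * q₁ + f₃ / 2) * u t ^ 2) t := by
  refine (((hf.mul (hv.pow 2)).sub (hf₁.mul (hu.mul hv))).add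
    (((hf.mul hq).add (hf₂.div_const 2)).mul (hu.pow 2))).congr_deriv ?_
  simp only [Pi.pow_apply, Pi.add_apply, Pi.mul_apply]
  ring

lemma mul_sq_le_weightedEnergy (hf : 0 < f t) :
    (f t * q t + f₂ t / 2 - f₁ t ^ 2 / (4 * f t)) * u t ^ 2 ≤ weightedEnergy f f₁ f₂ q u v t := by
  have complete_square : weightedEnergy f f₁ f₂ q u v t
      - (f t * q t + f₂ t / 2 - f₁ t ^ 2 / (4 * f t)) * u t ^ 2
      = f t * (v t - f₁ t * u t / (2 * f t)) ^ 2 := by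
    unfold weightedEnergy
    field_simp
    ring
  rw [← sub_nonneg, complete_square]
  positivity

/-- Where `q ≤ 0` the product `u u'` increases, so it is nonpositive if it tends to `0`. -/
lemma antitoneOn_sq_of_nonpos_potential {a : ℝ}
    (hu : ∀ t, HasDerivAt u (v t) t) (hv : ∀ t, HasDerivAt v (-q t * u t) t)
    (hq : ∀ t, a ≤ t → q t ≤ 0) (hlim : Tendsto (fun t ↦ u t * v t) atTop (nhds 0)) :
    AntitoneOn (fun t ↦ u t ^ 2) (Set.Ici a) := by
  have huv (t : ℝ) : HasDerivAt (fun t ↦ u t * v t) (v t ^ 2 + -q t * u t ^ 2) t :=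
    ((hu t).mul (hv t)).congr_deriv (by ring)
  have hmono : MonotoneOn (fun t ↦ u t * v t) (Set.Ici a) := by
    refine monotoneOn_of_hasDerivWithinAt_nonneg (convex_Ici a)
      (fun t _ ↦ (huv t).continuousAt.continuousWithinAt)
      (fun t _ ↦ (huv t).hasDerivWithinAt) fun t ht ↦ ?_
    have := neg_nonneg.2 (hq t (interior_subset ht))
    positivity
  have hnonpos : ∀ t, a ≤ t → u t * v t ≤ 0 := fun t ht ↦ by
    refine ge_of_tendsto hlim ?_
    filter_upwards [eventually_ge_atTop t] with x hx using hmono ht (ht.trans hx) hx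
  have hsq (t : ℝ) : HasDerivAt (fun t ↦ u t ^ 2) (2 * (u t * v t)) t :=
    ((hu t).pow 2).congr_deriv (by ring)
  refine antitoneOn_of_hasDerivWithinAt_nonpos (convex_Ici a)
    (fun t _ ↦ (hsq t).continuousAt.continuousWithinAt)
    (fun t _ ↦ (hsq t).hasDerivWithinAt) fun t ht ↦ ?_
  linarith [hnonpos t (interior_subset ht)]

end WeightedEnergy

section Weber

/-- The coefficient `q` of Weber's equation `u'' + q u = 0` with turning points `±r³`. -/
noncomputable def weberPotential (r t : ℝ) : ℝ := (r ^ 6 - t ^ 2) / 4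

/-- The WKB momentum `√q` of Weber's equation, regularised at the turning points by adding `r²`
to `q`. -/
noncomputable def shiftedMomentum (r t : ℝ) : ℝ := √(weberPotential r t + r ^ 2)

/-- The weighted energy of Weber's equation for the weight `1 / shiftedMomentum r`. -/
noncomputable def weberEnergy (r : ℝ) : (ℝ → ℝ) → (ℝ → ℝ) → ℝ → ℝ :=
  weightedEnergy (fun t ↦ 1 / shiftedMomentum r t) (fun t ↦ t / (4 * shiftedMomentum r t ^ 3))
    (fun t ↦ 1 / (4 * shiftedMomentum r t ^ 3) + 3 * t ^ 2 / (16 * shiftedMomentum r t ^ 5))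
    (weberPotential r)

variable {r t : ℝ}

lemma hasDerivAt_weberPotential (r t : ℝ) : HasDerivAt (weberPotential r) (-t / 2) t :=
  (((hasDerivAt_pow 2 t).const_sub (r ^ 6)).div_const 4).congr_deriv (by norm_num; ring)

lemma weberPotential_nonneg (ht : t ∈ Set.Icc 0 (r ^ 3)) : 0 ≤ weberPotential r t := by
  have := pow_le_pow_left₀ ht.1 ht.2 2
  unfold weberPotential
  linarith

lemma weberPotential_nonpos (hr : 0 ≤ r) (ht : r ^ 3 ≤ t) : weberPotential r t ≤ 0 := by
  have := pow_le_pow_left₀ (pow_nonneg hr 3) ht 2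
  unfold weberPotential
  linarith

lemma shiftedMomentum_sq (ht : t ∈ Set.Icc 0 (r ^ 3)) :
    shiftedMomentum r t ^ 2 = weberPotential r t + r ^ 2 :=
  Real.sq_sqrt (add_nonneg (weberPotential_nonneg ht) (sq_nonneg r))

lemma le_shiftedMomentum (ht : t ∈ Set.Icc 0 (r ^ 3)) : r ≤ shiftedMomentum r t :=
  Real.le_sqrt_of_sq_le (le_add_of_nonneg_left (weberPotential_nonneg ht))

lemma sq_eq_of_shiftedMomentum (ht : t ∈ Set.Icc 0 (r ^ 3)) :
    t ^ 2 = r ^ 6 - 4 * (shiftedMomentum r t ^ 2 - r ^ 2) := by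
  rw [shiftedMomentum_sq ht, weberPotential]
  ring

lemma hasDerivAt_shiftedMomentum (hs : 0 < shiftedMomentum r t) :
    HasDerivAt (shiftedMomentum r) (-t / (4 * shiftedMomentum r t)) t := by
  refine (((hasDerivAt_weberPotential r t).add_const (r ^ 2)).sqrt
    (Real.sqrt_pos.1 hs).ne').congr_deriv ?_
  change -t / 2 / (2 * shiftedMomentum r t) = _
  field_simp
  norm_num

lemma hasDerivAt_weberEnergy {u v : ℝ → ℝ} (hr : 0 < r) (ht : t ∈ Set.Icc 0 (r ^ 3))
    (hu : HasDerivAt u (v t) t) (hv : HasDerivAt v (-weberPotential r t * u t) t) :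
    HasDerivAt (weberEnergy r u v)
      (-(t / (2 * shiftedMomentum r t ^ 7) * (r ^ 2 * shiftedMomentum r t ^ 4
        - 9 / 16 * shiftedMomentum r t ^ 2 - 15 / 64 * t ^ 2) * u t ^ 2)) t := by
  have hs_pos : 0 < shiftedMomentum r t := hr.trans_le (le_shiftedMomentum ht)
  have hs_ne := hs_pos.ne'
  have hs := hasDerivAt_shiftedMomentum hs_pos
  have hf : HasDerivAt (fun t ↦ 1 / shiftedMomentum r t) (t / (4 * shiftedMomentum r t ^ 3)) t :=
    ((hasDerivAt_const t 1).div hs hs_ne).congr_deriv (by field_simp; ring)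
  have hf₁ : HasDerivAt (fun t ↦ t / (4 * shiftedMomentum r t ^ 3))
      (1 / (4 * shiftedMomentum r t ^ 3) + 3 * t ^ 2 / (16 * shiftedMomentum r t ^ 5)) t :=
    ((hasDerivAt_id' t).div ((hs.pow 3).const_mul 4) (by simp [hs_ne])).congr_deriv (by
      simp only [Pi.pow_apply]
      field_simp
      ring)
  have hf₂ : HasDerivAt (fun t ↦ 1 / (4 * shiftedMomentum r t ^ 3)
        + 3 * t ^ 2 / (16 * shiftedMomentum r t ^ 5))
      (9 * t / (16 * shiftedMomentum r t ^ 5) + 15 * t ^ 3 / (64 * shiftedMomentum r t ^ 7)) t :=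
    (((hasDerivAt_const t 1).div ((hs.pow 3).const_mul 4) (by simp [hs_ne])).add
      (((hasDerivAt_pow 2 t).const_mul 3).div ((hs.pow 5).const_mul 16)
        (by simp [hs_ne]))).congr_deriv (by
      simp only [Pi.pow_apply]
      field_simp
      ring)
  refine (hasDerivAt_weightedEnergy hf hf₁ hf₂ (hasDerivAt_weberPotential r t) hu hv).congr_deriv ?_
  rw [eq_sub_of_add_eq (shiftedMomentum_sq ht).symm]
  field_simp
  ring

lemma antitoneOn_weberEnergy {u v : ℝ → ℝ} (hr : 1 ≤ r)
    (hu : ∀ t, HasDerivAt u (v t) t) (hv : ∀ t, HasDerivAt v (-weberPotential r t * u t) t) :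
    AntitoneOn (weberEnergy r u v) (Set.Icc 0 (r ^ 3)) := by
  have hr0 : 0 < r := one_pos.trans_le hr
  refine antitoneOn_of_hasDerivWithinAt_nonpos (convex_Icc 0 (r ^ 3))
    (fun t ht ↦ (hasDerivAt_weberEnergy hr0 ht (hu t) (hv t)).continuousAt.continuousWithinAt)
    (fun t ht ↦ (hasDerivAt_weberEnergy hr0 (interior_subset ht) (hu t) (hv t)).hasDerivWithinAt)
    fun t ht ↦ neg_nonpos.2 ?_
  replace ht := interior_subset ht
  have hrs := le_shiftedMomentum ht
  have hs : 0 < shiftedMomentum r t := hr0.trans_le hrs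
  have ht0 : 0 ≤ t := ht.1
  have hr26 : r ^ 2 ≤ r ^ 6 := pow_le_pow_right₀ hr (by norm_num)
  have hrs2 : r ^ 2 ≤ shiftedMomentum r t ^ 2 := by gcongr
  have hrs4 : r ^ 6 ≤ r ^ 2 * shiftedMomentum r t ^ 4 := by
    calc r ^ 6 = r ^ 2 * r ^ 4 := by ring
      _ ≤ _ := by gcongr
  have hfactor : 0 ≤ r ^ 2 * shiftedMomentum r t ^ 4
      - 9 / 16 * shiftedMomentum r t ^ 2 - 15 / 64 * t ^ 2 := by
    rw [sq_eq_of_shiftedMomentum ht]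
    linarith [sq_nonneg r]
  positivity

lemma mul_pow_five_div_sixteen_le {r s : ℝ} (hr : 1 ≤ r) (hrs : r ≤ s) :
    r * s ^ 5 / 16 ≤ (s ^ 2 - r ^ 2) * s ^ 4 + 5 / 64 * (r ^ 6 - 4 * (s ^ 2 - r ^ 2)) := by
  have hs4 : 1 ≤ s ^ 4 := one_le_pow₀ (hr.trans hrs)
  have hq : s ^ 2 - r ^ 2 ≤ (s ^ 2 - r ^ 2) * s ^ 4 :=
    le_mul_of_one_le_right (sub_nonneg.2 (by gcongr)) hs4
  have hmain : r * s ^ 5 / 16 ≤ 11 / 16 * ((s ^ 2 - r ^ 2) * s ^ 4) + 5 / 64 * r ^ 6 := by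
    obtain ⟨d, hd, rfl⟩ : ∃ d, 0 ≤ d ∧ s = r + d := ⟨s - r, sub_nonneg.2 hrs, by ring⟩
    have : 0 ≤ r := zero_le_one.trans hr
    rw [← sub_nonneg]
    ring_nf
    positivity
  linarith

lemma mul_sq_le_weberEnergy (u v : ℝ → ℝ) (hr : 1 ≤ r) (ht : t ∈ Set.Icc 0 (r ^ 3)) :
    r * u t ^ 2 ≤ 16 * weberEnergy r u v t := by
  have hrs := le_shiftedMomentum ht
  have hs : 0 < shiftedMomentum r t := (one_pos.trans_le hr).trans_le hrs
  have henergy : _ ≤ weberEnergy r u v t := mul_sq_le_weightedEnergy (one_div_pos.2 hs)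
  refine le_trans ?_ (mul_le_mul_of_nonneg_left henergy (by norm_num))
  rw [← mul_assoc]
  refine mul_le_mul_of_nonneg_right ?_ (sq_nonneg _)
  have hq := eq_sub_of_add_eq (shiftedMomentum_sq ht).symm
  set s := shiftedMomentum r t
  calc r = 16 * (r * s ^ 5 / 16) / s ^ 5 := by field_simp
    _ ≤ 16 * ((s ^ 2 - r ^ 2) * s ^ 4 + 5 / 64 * t ^ 2) / s ^ 5 := by
      rw [sq_eq_of_shiftedMomentum ht]
      gcongr
      exact mul_pow_five_div_sixteen_le hr hrs
    _ ≤ 16 * ((s ^ 2 - r ^ 2) * s ^ 4 + 5 / 64 * t ^ 2) / s ^ 5 + 2 / s ^ 3 :=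
      le_add_of_nonneg_right (by positivity)
    _ = _ := by
      rw [hq]
      field_simp
      ring

lemma weberEnergy_zero_le (u v : ℝ → ℝ) (hr : 1 ≤ r) :
    weberEnergy r u v 0 ≤ 4 * (v 0 ^ 2 + weberPotential r 0 * u 0 ^ 2) / r ^ 3 := by
  have hr0 : 0 < r := one_pos.trans_le hr
  have hzero : (0 : ℝ) ∈ Set.Icc 0 (r ^ 3) := ⟨le_rfl, by positivity⟩
  have hrs := le_shiftedMomentum hzero
  have hq : weberPotential r 0 = r ^ 6 / 4 := by simp [weberPotential]
  have hs_sq := shiftedMomentum_sq hzero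
  have hs_low : r ^ 3 / 2 ≤ shiftedMomentum r 0 := by
    refine le_of_sq_le_sq ?_ (hr0.le.trans hrs)
    rw [hs_sq, hq]
    linarith [sq_nonneg r]
  have hs : 0 < shiftedMomentum r 0 := hr0.trans_le hrs
  have hcorrection : 1 / (8 * shiftedMomentum r 0 ^ 2) ≤ weberPotential r 0 := by
    rw [div_le_iff₀ (by positivity), hs_sq, hq]
    nlinarith [one_le_pow₀ (n := 6) hr, one_le_pow₀ (n := 2) hr]
  calc weberEnergy r u v 0
      = (v 0 ^ 2 + (weberPotential r 0 + 1 / (8 * shiftedMomentum r 0 ^ 2)) * u 0 ^ 2)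
          / shiftedMomentum r 0 := by
        simp only [weberEnergy, weightedEnergy]
        field_simp
        ring
    _ ≤ (2 * v 0 ^ 2 + (weberPotential r 0 + weberPotential r 0) * u 0 ^ 2) / (r ^ 3 / 2) := by
        gcongr
        · rw [hq]
          positivity
        · linarith [sq_nonneg (v 0)]
    _ = _ := by ring

theorem weber_pow_four_mul_sq_le {u v : ℝ → ℝ} (hr : 1 ≤ r)
    (hu : ∀ t, HasDerivAt u (v t) t) (hv : ∀ t, HasDerivAt v (-weberPotential r t * u t) t)
    (hlim : Tendsto (fun t ↦ u t * v t) atTop (nhds 0)) (ht : 0 ≤ t) :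
    r ^ 4 * u t ^ 2 ≤ 64 * (v 0 ^ 2 + weberPotential r 0 * u 0 ^ 2) := by
  have hr0 : 0 < r := one_pos.trans_le hr
  have hr3 : 0 ≤ r ^ 3 := by positivity
  have hoscillatory : ∀ x ∈ Set.Icc 0 (r ^ 3),
      r ^ 4 * u x ^ 2 ≤ 64 * (v 0 ^ 2 + weberPotential r 0 * u 0 ^ 2) := fun x hx ↦ by
    have henergy : weberEnergy r u v x ≤ weberEnergy r u v 0 :=
      antitoneOn_weberEnergy hr hu hv ⟨le_rfl, hr3⟩ hx hx.1
    calc r ^ 4 * u x ^ 2 = r ^ 3 * (r * u x ^ 2) := by ring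
      _ ≤ r ^ 3 * (16 * weberEnergy r u v x) :=
        mul_le_mul_of_nonneg_left (mul_sq_le_weberEnergy u v hr hx) hr3
      _ ≤ r ^ 3 * (16 * (4 * (v 0 ^ 2 + weberPotential r 0 * u 0 ^ 2) / r ^ 3)) := by
        gcongr
        exact henergy.trans (weberEnergy_zero_le u v hr)
      _ = _ := by
        field_simp
        ring
  rcases le_total t (r ^ 3) with htr | hrt
  · exact hoscillatory t ⟨ht, htr⟩
  · have hdecay : u t ^ 2 ≤ u (r ^ 3) ^ 2 :=
      antitoneOn_sq_of_nonpos_potential hu hv (fun _ ↦ weberPotential_nonpos hr0.le) hlim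
        Set.self_mem_Ici hrt hrt
    exact (by gcongr : r ^ 4 * u t ^ 2 ≤ r ^ 4 * u (r ^ 3) ^ 2).trans
      (hoscillatory _ ⟨hr3, le_rfl⟩)

end Weber

open Polynomial in
lemma derivative_hermite_succ (n : ℕ) :
    derivative (hermite (n + 1)) = ((n : ℤ[X]) + 1) * hermite n := by
  induction n with
  | zero => simp
  | succ n ih =>
    have hderiv_coeff : derivative ((n : ℤ[X]) + 1) = 0 := by simp
    rw [hermite_succ (n + 1), derivative_sub, derivative_mul, ih, derivative_X, derivative_mul,
      hderiv_coeff]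
    push_cast
    linear_combination (-(n : ℤ[X]) - 1) * hermite_succ n

namespace Hermite

lemma add_two (n : ℕ) (x : ℝ) :
    Hermite (n + 2) x = x * Hermite (n + 1) x - (n + 1) * Hermite n x := by
  unfold Hermite
  rw [Polynomial.hermite_succ (n + 1), derivative_hermite_succ]
  simp

lemma neg_arg (n : ℕ) (x : ℝ) : Hermite n (-x) = (-1) ^ n * Hermite n x := by
  induction n using Nat.twoStepInduction with
  | zero => simp [Hermite]
  | one => simp [Hermite]
  | more n ih ih' =>
    rw [add_two, add_two, ih, ih']
    ring

lemma hasDerivAt (n : ℕ) (x : ℝ) :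
    HasDerivAt (Hermite n) (x * Hermite n x - Hermite (n + 1) x) x :=
  ((Polynomial.hermite n).hasDerivAt_aeval x).congr_deriv (by
    simp [Hermite, Polynomial.hermite_succ])

lemma hasDerivAt_succ (n : ℕ) (x : ℝ) :
    HasDerivAt (Hermite (n + 1)) ((n + 1) * Hermite n x) x :=
  (hasDerivAt (n + 1) x).congr_deriv (by rw [add_two]; ring)

lemma succ_mul_pow_four_at_zero_le (n : ℕ) :
    ((n : ℝ) + 1) * Hermite n 0 ^ 4 ≤ (n.factorial : ℝ) ^ 2 := by
  induction n using Nat.twoStepInduction with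
  | zero => simp [Hermite]
  | one => simp [Hermite]
  | more n ih _ =>
    rw [add_two, Nat.factorial_succ, Nat.factorial_succ]
    push_cast
    calc ((n : ℝ) + 2 + 1) * (0 * Hermite (n + 1) 0 - (n + 1) * Hermite n 0) ^ 4
        = (n + 3) * (n + 1) * (n + 1) ^ 2 * ((n + 1) * Hermite n 0 ^ 4) := by ring
      _ ≤ (n + 2) ^ 2 * (n + 1) ^ 2 * (n.factorial : ℝ) ^ 2 := by
        gcongr
        nlinarith
      _ = _ := by ring

lemma mul_sq_at_zero_le (n : ℕ) :
    ((n : ℝ) + 1 / 2) * Hermite n 0 ^ 2 ≤ √((n : ℝ) + 1 / 2) * n.factorial := by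
  refine le_of_sq_le_sq ?_ (by positivity)
  rw [mul_pow, mul_pow, Real.sq_sqrt (by positivity)]
  calc ((n : ℝ) + 1 / 2) ^ 2 * (Hermite n 0 ^ 2) ^ 2
      = (n + 1 / 2) * ((n + 1 / 2) * Hermite n 0 ^ 4) := by ring
    _ ≤ (n + 1 / 2) * ((n + 1) * Hermite n 0 ^ 4) := by gcongr; norm_num
    _ ≤ (n + 1 / 2) * (n.factorial : ℝ) ^ 2 := by gcongr; exact succ_mul_pow_four_at_zero_le n

lemma sq_succ_at_zero_le (n : ℕ) :
    Hermite (n + 1) 0 ^ 2 ≤ √((n : ℝ) + 1 / 2) * n.factorial := by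
  refine le_of_sq_le_sq ?_ (by positivity)
  rw [mul_pow, Real.sq_sqrt (by positivity)]
  have hfourth : ((n : ℝ) + 2) * Hermite (n + 1) 0 ^ 4 ≤ ((n + 1 : ℝ) * n.factorial) ^ 2 := by
    have h := succ_mul_pow_four_at_zero_le (n + 1)
    rw [Nat.factorial_succ] at h
    push_cast at h
    linarith
  refine le_of_mul_le_mul_left ?_ (by positivity : (0 : ℝ) < n + 2)
  calc ((n : ℝ) + 2) * (Hermite (n + 1) 0 ^ 2) ^ 2 = (n + 2) * Hermite (n + 1) 0 ^ 4 := by ring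
    _ ≤ ((n + 1 : ℝ) * n.factorial) ^ 2 := hfourth
    _ = (n + 1) ^ 2 * (n.factorial : ℝ) ^ 2 := by ring
    _ ≤ (n + 2) * (n + 1 / 2) * (n.factorial : ℝ) ^ 2 := by
      gcongr
      have : (0 : ℝ) ≤ n := n.cast_nonneg
      nlinarith
    _ = _ := by ring

end Hermite

lemma tendsto_eval_mul_exp_neg_mul_sq {b : ℝ} (hb : 0 < b) (p : Polynomial ℝ) :
    Tendsto (fun x ↦ p.eval x * Real.exp (-b * x ^ 2)) atTop (nhds 0) := by
  refine ((Asymptotics.isBigO_refl p.eval atTop).mul_isLittleO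
    (exp_neg_mul_sq_isLittleO_exp_neg hb)).isBigO.trans_tendsto ?_
  simpa only [div_eq_mul_inv, Real.exp_neg] using p.tendsto_div_exp_atTop

lemma hasDerivAt_exp_neg_sq_div_four (x : ℝ) :
    HasDerivAt (fun x : ℝ ↦ Real.exp (-x ^ 2 / 4)) (Real.exp (-x ^ 2 / 4) * (-(x / 2))) x :=
  ((hasDerivAt_pow 2 x).neg.div_const 4).exp.congr_deriv (by
    simp only [Pi.neg_apply]
    norm_num
    ring)

/-- The Hermite function `H_k(x) e^{-x²/4}`, not normalised in `L²`. -/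
noncomputable def hermiteFunction (k : ℕ) (x : ℝ) : ℝ := Hermite k x * Real.exp (-x ^ 2 / 4)

namespace hermiteFunction

lemma sq_neg_arg (k : ℕ) (x : ℝ) : hermiteFunction k (-x) ^ 2 = hermiteFunction k x ^ 2 := by
  simp only [hermiteFunction, Hermite.neg_arg, neg_sq, mul_pow]
  rw [← pow_mul, (even_two.mul_left k).neg_one_pow, one_mul]

lemma hasDerivAt (k : ℕ) (x : ℝ) :
    HasDerivAt (hermiteFunction k) (x / 2 * hermiteFunction k x - hermiteFunction (k + 1) x) x :=
  ((Hermite.hasDerivAt k x).mul (hasDerivAt_exp_neg_sq_div_four x)).congr_deriv (by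
    simp only [hermiteFunction]
    ring)

lemma hasDerivAt_succ (k : ℕ) (x : ℝ) :
    HasDerivAt (hermiteFunction (k + 1))
      ((k + 1) * hermiteFunction k x - x / 2 * hermiteFunction (k + 1) x) x :=
  ((Hermite.hasDerivAt_succ k x).mul (hasDerivAt_exp_neg_sq_div_four x)).congr_deriv (by
    simp only [hermiteFunction]
    ring)

lemma hasDerivAt_deriv (k : ℕ) (x : ℝ) :
    HasDerivAt (fun x ↦ x / 2 * hermiteFunction k x - hermiteFunction (k + 1) x)
      (-(k + 1 / 2 - x ^ 2 / 4) * hermiteFunction k x) x :=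
  ((((hasDerivAt_id' x).div_const 2).mul (hasDerivAt k x)).sub
    (hasDerivAt_succ k x)).congr_deriv (by ring)

lemma tendsto_pow_mul (k m : ℕ) :
    Tendsto (fun x ↦ x ^ m * hermiteFunction k x) atTop (nhds 0) := by
  refine (tendsto_eval_mul_exp_neg_mul_sq (b := 1 / 4) (by norm_num)
    (Polynomial.X ^ m * (Polynomial.hermite k).map (algebraMap ℤ ℝ))).congr fun x ↦ ?_
  rw [Polynomial.eval_mul, Polynomial.eval_pow, Polynomial.eval_X, Polynomial.eval_map_algebraMap,
    mul_assoc, hermiteFunction, Hermite]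
  ring_nf

lemma tendsto_mul_deriv (k : ℕ) :
    Tendsto (fun x ↦ hermiteFunction k x * (x / 2 * hermiteFunction k x
      - hermiteFunction (k + 1) x)) atTop (nhds 0) := by
  have h : Tendsto (fun x ↦ x ^ 0 * hermiteFunction k x * (1 / 2 * (x ^ 1 * hermiteFunction k x)
      - x ^ 0 * hermiteFunction (k + 1) x)) atTop (nhds (0 * (1 / 2 * 0 - 0))) :=
    (tendsto_pow_mul k 0).mul
      (((tendsto_pow_mul k 1).const_mul _).sub (tendsto_pow_mul (k + 1) 0))
  rw [zero_mul] at h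
  exact h.congr fun x ↦ by ring

theorem rpow_mul_sq_le (k : ℕ) (y : ℝ) :
    (4 * (k : ℝ) + 2) ^ (1 / 6 : ℝ) * hermiteFunction k y ^ 2 ≤ 64 * k.factorial := by
  wlog hy : 0 ≤ y generalizing y
  · simpa only [sq_neg_arg] using this (-y) (by linarith)
  set r : ℝ := (4 * (k : ℝ) + 2) ^ (1 / 6 : ℝ) with hr_def
  have hr : 1 ≤ r := Real.one_le_rpow (by linarith [k.cast_nonneg (α := ℝ)]) (by norm_num)
  have hr0 : 0 < r := one_pos.trans_le hr
  have hr6 : r ^ 6 = 4 * k + 2 := by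
    rw [hr_def, ← Real.rpow_natCast, ← Real.rpow_mul (by positivity)]
    norm_num
  have hpotential (x : ℝ) : weberPotential r x = k + 1 / 2 - x ^ 2 / 4 := by
    rw [weberPotential, hr6]
    ring
  have hsqrt : √((k : ℝ) + 1 / 2) = r ^ 3 / 2 := by
    rw [Real.sqrt_eq_iff_mul_self_eq (by positivity) (by positivity)]
    linear_combination -hr6 / 4
  have hbound := weber_pow_four_mul_sq_le hr (hasDerivAt k)
    (fun x ↦ by simpa only [hpotential] using hasDerivAt_deriv k x) (tendsto_mul_deriv k) hy
  have hinitial : Hermite (k + 1) 0 ^ 2 + (k + 1 / 2) * Hermite k 0 ^ 2 ≤ r ^ 3 * k.factorial := by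
    have h := add_le_add (Hermite.sq_succ_at_zero_le k) (Hermite.mul_sq_at_zero_le k)
    rw [hsqrt] at h
    linarith
  refine le_of_mul_le_mul_left ?_ (pow_pos hr0 3)
  calc r ^ 3 * (r * hermiteFunction k y ^ 2) = r ^ 4 * hermiteFunction k y ^ 2 := by ring
    _ ≤ 64 * (Hermite (k + 1) 0 ^ 2 + (k + 1 / 2) * Hermite k 0 ^ 2) := by
      simpa [hermiteFunction, hpotential] using hbound
    _ ≤ 64 * (r ^ 3 * k.factorial) := by gcongr
    _ = _ := by ring

theorem rpow_mul_abs_le (k : ℕ) (y : ℝ) :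
    (k : ℝ) ^ (1 / 12 : ℝ) * |hermiteFunction k y| ≤ 8 * √k.factorial := by
  have hk : (0 : ℝ) ≤ k := k.cast_nonneg
  refine le_of_sq_le_sq ?_ (by positivity)
  calc ((k : ℝ) ^ (1 / 12 : ℝ) * |hermiteFunction k y|) ^ 2
      = (k : ℝ) ^ (1 / 6 : ℝ) * hermiteFunction k y ^ 2 := by
        rw [mul_pow, sq_abs, ← Real.rpow_mul_natCast hk]
        norm_num
    _ ≤ (4 * (k : ℝ) + 2) ^ (1 / 6 : ℝ) * hermiteFunction k y ^ 2 := by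
        gcongr
        linarith
    _ ≤ 64 * k.factorial := rpow_mul_sq_le k y
    _ = (8 * √k.factorial) ^ 2 := by
        rw [mul_pow, Real.sq_sqrt (by positivity)]
        norm_num

end hermiteFunction

theorem stmt10 : ∃ C₀ > 0, ∀ k : ℕ, 1 ≤ k → ∀ y : ℝ,
    |Real.exp (-y ^ 2 / 2) * Hermite k y|
      ≤ C₀ * Real.sqrt (Nat.factorial k) * (k : ℝ) ^ (-(1 / 12 : ℝ)) *
          Real.exp (-y ^ 2 / 4) := by
  refine ⟨8, by norm_num, fun k hk y ↦ ?_⟩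
  have hk_pos : (0 : ℝ) < k := by exact_mod_cast hk
  have hfactor : Real.exp (-y ^ 2 / 2) * Hermite k y
      = hermiteFunction k y * Real.exp (-y ^ 2 / 4) := by
    rw [hermiteFunction, mul_assoc, ← Real.exp_add, mul_comm]
    ring_nf
  rw [hfactor, abs_mul, Real.abs_exp, Real.rpow_neg hk_pos.le, ← div_eq_mul_inv]
  gcongr
  rw [le_div_iff₀' (Real.rpow_pos_of_pos hk_pos _)]
  exact hermiteFunction.rpow_mul_abs_le k y
end
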